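/- For every ε > 0 there exist a bounded linear operator T on a separable complex Hilbert space and a compact linear operator K with ‖K‖ < ε such that T is distributionally chaotic but T − K is not distributionally chaotic. In particular, distributional chaos is not preserved under compact perturbations of bounded linear operators. -/

import Mathlib

open Filter Topology MeasureTheory
open scoped Classical ENNReal

noncomputable def distFreq {X : Type*} [MetricSpace X] (f : X → X) (x y : X) (τ : ℝ) (n : ℕ) : ℝ :=
  (((Finset.range n).filter fun i => dist (f^[i] x) (f^[i] y) < τ).card : ℝ) / n

def DistributionallyChaoticPair {X : Type*} [MetricSpace X] (f : X → X) (x y : X) : Prop :=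
  (∀ τ : ℝ, 0 < τ → Filter.limsup (distFreq f x y τ) Filter.atTop = 1) ∧
  (∃ ε : ℝ, 0 < ε ∧ Filter.liminf (distFreq f x y ε) Filter.atTop = 0)

def DistributionallyChaotic {X : Type*} [MetricSpace X] (f : X → X) : Prop :=
  ∃ Λ : Set X, ¬Λ.Countable ∧
    ∀ x ∈ Λ, ∀ y ∈ Λ, x ≠ y → DistributionallyChaoticPair f x y

def LiYorkePair {X : Type*} [MetricSpace X] (f : X → X) (x y : X) : Prop :=
  0 < Filter.limsup (fun n => edist (f^[n] x) (f^[n] y)) Filter.atTop ∧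
  Filter.liminf (fun n => edist (f^[n] x) (f^[n] y)) Filter.atTop = 0

def LiYorkeChaotic {X : Type*} [MetricSpace X] (f : X → X) : Prop :=
  ∃ Γ : Set X, ¬Γ.Countable ∧ ∀ x ∈ Γ, ∀ y ∈ Γ, x ≠ y → LiYorkePair f x y

def NormUnimodal {X : Type*} [NormedAddCommGroup X] [NormedSpace ℂ X] (T : X →L[ℂ] X) : Prop :=
  ∃ r : ℝ, 1 < r ∧ ∀ m : ℕ, ∃ x : X, x ≠ 0 ∧
    Filter.Tendsto (fun k => ‖(T ^ k) x‖) Filter.atTop (nhds 0) ∧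
    ∀ i : ℕ, 1 ≤ i → i ≤ m → r ^ i * ‖x‖ ≤ ‖(T ^ i) x‖

/-!
The perturbation `K` is a norm-convergent sum of small rank-two operators living on mutually
orthogonal planes, chosen so that `T = 1 + K` acts on the `j`-th plane as a Jordan block with
eigenvalue `1 - d j` and off-diagonal entry `c j`. On the second basis vector `f j` the iterates
behave like `n * c j * (1 - d j) ^ (n - 1)`: this tends to `0`, but if `d j` is small enough
compared with `c j` the orbit of the small vector `c j • f j` stays above `1 / 2` on a window
`[a, (j + 1) * a)`. Vectors with orbits tending to `0` form a subspace, and adding `c j • f j` to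
them shows that those having both tiny and large orbits on long windows are dense in its closure. By
Baire's theorem some `x` has both properties for windows of every ratio, so `x` and `0` form a
distributionally chaotic pair, as do any two scalar multiples of `x`. Removing `K` leaves the
identity.
-/

/-- `HoldsOnWindow k P`: the predicate `P` holds throughout some window `[a, (k + 1) * a)` with
`0 < a`. If this happens for arbitrarily large `k`, then `P` has upper density `1`. -/
def HoldsOnWindow (k : ℕ) (P : ℕ → Prop) : Prop :=
  ∃ a > 0, ∀ n ∈ Set.Ico a ((k + 1) * a), P n

section Window

variable {k : ℕ} {P Q : ℕ → Prop}

lemma HoldsOnWindow.mono (hP : HoldsOnWindow k P) (hPQ : ∀ n, P n → Q n) : HoldsOnWindow k Q :=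
  let ⟨a, ha, h⟩ := hP
  ⟨a, ha, fun n hn => hPQ n (h n hn)⟩

lemma holdsOnWindow_of_eventually (hP : ∀ᶠ n in atTop, P n) (k : ℕ) : HoldsOnWindow k P := by
  obtain ⟨N, hN⟩ := eventually_atTop.mp hP
  exact ⟨N + 1, N.succ_pos, fun n hn => hN n (N.le_succ.trans hn.1)⟩

lemma isOpen_setOf_holdsOnWindow {X Y : Type*} [TopologicalSpace X] [TopologicalSpace Y]
    {f : ℕ → X → Y} (hf : ∀ n, Continuous (f n)) {U : Set Y} (hU : IsOpen U) (k : ℕ) :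
    IsOpen {x | HoldsOnWindow k fun n => f n x ∈ U} := by
  simp only [HoldsOnWindow, Set.ofPred_exists, Set.ofPred_and, Set.ofPred_forall]
  exact isOpen_iUnion fun a => isOpen_const.inter <|
    (Set.finite_Ico _ _).isOpen_biInter fun n _ => hU.preimage (hf n)

end Window

section Frequency

variable {X : Type*} [MetricSpace X] {f : X → X} {x y : X} {τ : ℝ} {k a : ℕ}

lemma distFreq_nonneg (f : X → X) (x y : X) (τ : ℝ) (n : ℕ) : 0 ≤ distFreq f x y τ n := by
  unfold distFreq
  positivity

lemma distFreq_le_one (f : X → X) (x y : X) (τ : ℝ) (n : ℕ) : distFreq f x y τ n ≤ 1 := by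
  refine div_le_one_of_le₀ (Nat.cast_le.mpr ?_) n.cast_nonneg
  simpa only [Finset.card_range] using Finset.card_filter_le (Finset.range n) _

lemma isBoundedUnder_le_distFreq (f : X → X) (x y : X) (τ : ℝ) :
    IsBoundedUnder (· ≤ ·) atTop (distFreq f x y τ) :=
  isBoundedUnder_of ⟨1, distFreq_le_one f x y τ⟩

lemma isBoundedUnder_ge_distFreq (f : X → X) (x y : X) (τ : ℝ) :
    IsBoundedUnder (· ≥ ·) atTop (distFreq f x y τ) :=
  isBoundedUnder_of ⟨0, distFreq_nonneg f x y τ⟩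

lemma le_distFreq_of_forall_mem_Ico (ha : 0 < a)
    (h : ∀ i ∈ Set.Ico a ((k + 1) * a), dist (f^[i] x) (f^[i] y) < τ) :
    (k / (k + 1) : ℝ) ≤ distFreq f x y τ ((k + 1) * a) := by
  have hsub : Finset.Ico a ((k + 1) * a) ⊆
      (Finset.range ((k + 1) * a)).filter fun i => dist (f^[i] x) (f^[i] y) < τ := fun i hi => by
    rw [Finset.mem_Ico] at hi
    exact Finset.mem_filter.mpr ⟨Finset.mem_range.mpr hi.2, h i hi⟩
  have hcard := Finset.card_le_card hsub
  rw [Nat.card_Ico, add_mul, one_mul, Nat.add_sub_cancel] at hcard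
  calc (k / (k + 1) : ℝ) = ((k * a : ℕ) : ℝ) / (((k + 1) * a : ℕ) : ℝ) := by
        push_cast
        rw [mul_div_mul_right _ _ (by positivity)]
    _ ≤ distFreq f x y τ ((k + 1) * a) := by
        unfold distFreq
        gcongr
        rwa [add_mul, one_mul]

lemma distFreq_le_of_forall_mem_Ico (ha : 0 < a)
    (h : ∀ i ∈ Set.Ico a ((k + 1) * a), τ ≤ dist (f^[i] x) (f^[i] y)) :
    distFreq f x y τ ((k + 1) * a) ≤ 1 / (k + 1) := by
  have hsub : ((Finset.range ((k + 1) * a)).filter fun i => dist (f^[i] x) (f^[i] y) < τ) ⊆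
      Finset.range a := fun i hi => by
    simp only [Finset.mem_filter, Finset.mem_range] at hi ⊢
    by_contra! hai
    exact (h i ⟨hai, hi.1⟩).not_gt hi.2
  have hcard := Finset.card_le_card hsub
  rw [Finset.card_range] at hcard
  calc distFreq f x y τ ((k + 1) * a) ≤ (a : ℝ) / (((k + 1) * a : ℕ) : ℝ) := by
        unfold distFreq
        gcongr
    _ = 1 / (k + 1) := by
        push_cast
        field_simp

lemma frequently_atTop_of_frequently_holdsOnWindow {P Q : ℕ → Prop}
    (h : ∃ᶠ k in atTop, HoldsOnWindow k P)
    (hPQ : ∀ᶠ k in atTop, ∀ a > 0, (∀ n ∈ Set.Ico a ((k + 1) * a), P n) → Q ((k + 1) * a)) :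
    ∃ᶠ n in atTop, Q n := by
  refine frequently_atTop.mpr fun N => ?_
  obtain ⟨k, ⟨⟨a, ha, hP⟩, hPQ⟩, hk⟩ := ((h.and_eventually hPQ).and_eventually
    (eventually_ge_atTop N)).exists
  exact ⟨(k + 1) * a, hk.trans (k.le_succ.trans (Nat.le_mul_of_pos_right _ ha)), hPQ a ha hP⟩

lemma limsup_distFreq_eq_one
    (h : ∃ᶠ k in atTop, HoldsOnWindow k fun n => dist (f^[n] x) (f^[n] y) < τ) :
    limsup (distFreq f x y τ) atTop = 1 := by
  refine le_antisymm (limsup_le_of_le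
    (isBoundedUnder_ge_distFreq f x y τ).isCoboundedUnder_le
    (Eventually.of_forall (distFreq_le_one f x y τ))) (le_of_forall_lt_imp_le_of_dense ?_)
  refine fun c hc => le_limsup_of_frequently_le ?_ (isBoundedUnder_le_distFreq f x y τ)
  refine frequently_atTop_of_frequently_holdsOnWindow h ?_
  filter_upwards [(tendsto_natCast_div_add_atTop (1 : ℝ)).eventually (lt_mem_nhds hc)]
    with k hk a ha hP
  exact hk.le.trans (le_distFreq_of_forall_mem_Ico ha hP)

lemma liminf_distFreq_eq_zero
    (h : ∃ᶠ k in atTop, HoldsOnWindow k fun n => τ ≤ dist (f^[n] x) (f^[n] y)) :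
    liminf (distFreq f x y τ) atTop = 0 := by
  refine le_antisymm (le_of_forall_gt_imp_ge_of_dense ?_) (le_liminf_of_le
    (isBoundedUnder_le_distFreq f x y τ).isCoboundedUnder_ge
    (Eventually.of_forall (distFreq_nonneg f x y τ)))
  refine fun c hc => liminf_le_of_frequently_le ?_ (isBoundedUnder_ge_distFreq f x y τ)
  refine frequently_atTop_of_frequently_holdsOnWindow h ?_
  filter_upwards [(tendsto_one_div_add_atTop_nhds_zero_nat (𝕜 := ℝ)).eventually (gt_mem_nhds hc)]
    with k hk a ha hP
  exact (distFreq_le_of_forall_mem_Ico ha hP).trans hk.le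

lemma distFreq_self (f : X → X) (x : X) (hτ : 0 < τ) {n : ℕ} (hn : n ≠ 0) :
    distFreq f x x τ n = 1 := by
  simp [distFreq, hτ, hn]

lemma DistributionallyChaoticPair.ne (h : DistributionallyChaoticPair f x y) : x ≠ y := by
  rintro rfl
  obtain ⟨-, δ, hδ, hlim⟩ := h
  have hone : distFreq f x x δ =ᶠ[atTop] fun _ => 1 :=
    (eventually_ne_atTop 0).mono fun _ => distFreq_self f x hδ
  rw [liminf_congr hone, liminf_const] at hlim
  exact one_ne_zero hlim

lemma not_distributionallyChaotic_of_isometry (hf : Isometry f) :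
    ¬ DistributionallyChaotic f := by
  rintro ⟨Λ, hΛ, hpair⟩
  refine hΛ (Set.Subsingleton.countable fun x hx y hy => ?_)
  by_contra hxy
  have hiter : ∀ n, dist (f^[n] x) (f^[n] y) = dist x y := fun n => by
    induction n with
    | zero => rfl
    | succ n ih => rw [Function.iterate_succ_apply', Function.iterate_succ_apply', hf.dist_eq, ih]
  have hlim := (hpair x hx y hy hxy).1 (dist x y) (dist_pos.mpr hxy)
  have hzero : distFreq f x y (dist x y) = fun _ => 0 := by
    ext n
    simp [distFreq, hiter]
  rw [hzero, limsup_const] at hlim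
  exact zero_ne_one hlim

end Frequency

section LinearDynamics

variable {𝕜 E : Type*} [NontriviallyNormedField 𝕜] [NormedAddCommGroup E] [NormedSpace 𝕜 E]
  {T : E →L[𝕜] E}

lemma distFreq_smul_smul (T : E →L[𝕜] E) (x : E) {s t : 𝕜} (hst : s ≠ t) (τ : ℝ) :
    distFreq T (s • x) (t • x) τ = distFreq T x 0 (τ / ‖s - t‖) := by
  have hpos : 0 < ‖s - t‖ := norm_pos_iff.mpr (sub_ne_zero.mpr hst)
  have hdist : ∀ n, dist (T^[n] (s • x)) (T^[n] (t • x)) = dist (T^[n] x) (T^[n] 0) * ‖s - t‖ :=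
    fun n => by
      simp only [dist_eq_norm, ← FunLike.coe_pow_eq_iterate, ← map_sub, ← sub_smul, sub_zero,
        map_smul, norm_smul, mul_comm]
  ext n
  simp only [distFreq, hdist, lt_div_iff₀ hpos]

lemma DistributionallyChaoticPair.smul_smul {x : E} (h : DistributionallyChaoticPair T x 0)
    {s t : 𝕜} (hst : s ≠ t) : DistributionallyChaoticPair T (s • x) (t • x) := by
  have hpos : 0 < ‖s - t‖ := norm_pos_iff.mpr (sub_ne_zero.mpr hst)
  obtain ⟨hlimsup, δ, hδ, hliminf⟩ := h
  refine ⟨fun τ hτ => ?_, δ * ‖s - t‖, by positivity, ?_⟩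
  · rw [distFreq_smul_smul T x hst]
    exact hlimsup _ (by positivity)
  · rwa [distFreq_smul_smul T x hst, mul_div_cancel_right₀ _ hpos.ne']

lemma DistributionallyChaoticPair.distributionallyChaotic [CompleteSpace 𝕜] {x : E}
    (h : DistributionallyChaoticPair T x 0) : DistributionallyChaotic T := by
  refine ⟨Set.range fun t : 𝕜 => t • x, fun hcount => ?_, ?_⟩
  · have huniv : (Set.univ : Set 𝕜).Countable :=
      Set.countable_of_injective_of_countable_image (smul_left_injective 𝕜 h.ne).injOn
        (Set.image_univ ▸ hcount)
    rw [← Cardinal.le_aleph0_iff_set_countable, Cardinal.mk_univ] at huniv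
    exact (Cardinal.aleph0_lt_continuum.trans_le
      (continuum_le_cardinal_of_nontriviallyNormedField 𝕜)).not_ge huniv
  · rintro _ ⟨s, rfl⟩ _ ⟨t, rfl⟩ hne
    exact h.smul_smul fun hst => hne (hst ▸ rfl)

lemma nonempty_iInter_of_subset_closure_inter {X : Type*} [PseudoMetricSpace X] [CompleteSpace X]
    {S : Set X} (hS : S.Nonempty) {U : ℕ → Set X} (hopen : ∀ k, IsOpen (U k))
    (hsub : ∀ k, S ⊆ closure (S ∩ U k)) : (⋂ k, U k).Nonempty := by
  have : CompleteSpace (closure S) := isClosed_closure.completeSpace_coe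
  have : Nonempty (closure S) := hS.closure.to_subtype
  have hdense : ∀ k, Dense ((↑) ⁻¹' U k : Set (closure S)) := fun k => by
    rw [Subtype.dense_iff, Subtype.image_preimage_coe]
    exact closure_minimal ((hsub k).trans (closure_mono (Set.inter_subset_inter_left _
      subset_closure))) isClosed_closure
  obtain ⟨x, hx⟩ := (dense_iInter_of_isOpen_nat
    (fun k => (hopen k).preimage continuous_subtype_val) hdense).nonempty
  exact ⟨x, Set.mem_iInter.mpr fun k => Set.mem_iInter.mp hx k⟩

/-- The subspace of vectors whose `T`-orbit tends to `0`. -/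
def stableSubspace (T : E →L[𝕜] E) : Submodule 𝕜 E where
  carrier := {x | Tendsto (fun n => T^[n] x) atTop (𝓝 0)}
  zero_mem' := by simp
  add_mem' hx hy := by
    simpa only [Set.mem_ofPred_eq, iterate_map_add, add_zero] using hx.add hy
  smul_mem' c x hx := by
    simpa only [Set.mem_ofPred_eq, ← FunLike.coe_pow_eq_iterate, map_smul, smul_zero]
      using hx.const_smul c

lemma mem_stableSubspace {x : E} :
    x ∈ stableSubspace T ↔ Tendsto (fun n => T^[n] x) atTop (𝓝 0) :=
  Iff.rfl

/-- The open set of vectors whose orbit is smaller than `1 / (k + 1)` on a window of ratio `k + 1`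
and larger than `η` on another such window. A vector lying in all of them forms a distributionally
chaotic pair with `0`. -/
def irregularSet (T : E →L[𝕜] E) (η : ℝ) (k : ℕ) : Set E :=
  {x | HoldsOnWindow k fun n => ‖T^[n] x‖ < 1 / (k + 1)} ∩
    {x | HoldsOnWindow k fun n => η < ‖T^[n] x‖}

lemma isOpen_irregularSet (T : E →L[𝕜] E) (η : ℝ) (k : ℕ) : IsOpen (irregularSet T η k) :=
  have hcont : ∀ n, Continuous fun x => ‖T^[n] x‖ := fun n => (T.continuous.iterate n).norm
  (isOpen_setOf_holdsOnWindow hcont isOpen_Iio k).inter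
    (isOpen_setOf_holdsOnWindow hcont isOpen_Ioi k)

lemma distributionallyChaoticPair_zero_of_mem_irregularSet {η : ℝ} (hη : 0 < η) {x : E}
    (hx : ∀ k, x ∈ irregularSet T η k) : DistributionallyChaoticPair T x 0 := by
  have hdist : ∀ n, dist (T^[n] x) (T^[n] 0) = ‖T^[n] x‖ := fun n => by
    rw [iterate_map_zero, dist_zero_right]
  refine ⟨fun τ hτ => limsup_distFreq_eq_one ?_, η, hη, liminf_distFreq_eq_zero ?_⟩
  · refine Eventually.frequently ?_
    filter_upwards [(tendsto_one_div_add_atTop_nhds_zero_nat (𝕜 := ℝ)).eventually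
      (gt_mem_nhds hτ)] with k hk
    exact (hx k).1.mono fun n hn => (hdist n).trans_lt (hn.trans hk)
  · exact Frequently.of_forall fun k => (hx k).2.mono fun n hn => hn.le.trans (hdist n).ge

lemma tendsto_atTop_of_le_norm_iterate {η : ℝ} (hη : 0 < η) {y : ℕ → E}
    (hy : Tendsto y atTop (𝓝 0)) {a : ℕ → ℕ}
    (ha : ∀ᶠ k in atTop, η ≤ ‖T^[a k] (y k)‖) : Tendsto a atTop atTop := by
  refine tendsto_atTop.mpr fun N => ?_
  have hsmall : ∀ᶠ k in atTop, ∀ n ∈ Finset.range N, ‖T^[n] (y k)‖ < η :=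
    (Finset.range N).eventually_all.mpr fun n _ => by
      have hlim := ((T.continuous.iterate n).norm.tendsto 0).comp hy
      rw [iterate_map_zero, norm_zero] at hlim
      exact hlim.eventually (gt_mem_nhds hη)
  filter_upwards [hsmall, ha] with k hk hak
  by_contra! hlt
  exact hak.not_gt (hk _ (Finset.mem_range.mpr hlt))

lemma stableSubspace_subset_closure_inter_irregularSet {η : ℝ} (hη : 0 < η) {y : ℕ → E}
    (hy : Tendsto y atTop (𝓝 0)) (hstable : ∀ k, y k ∈ stableSubspace T)
    (hpeak : ∀ k, HoldsOnWindow k fun n => η ≤ ‖T^[n] (y k)‖) (k : ℕ) :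
    (stableSubspace T : Set E) ⊆ closure (stableSubspace T ∩ irregularSet T (η / 2) k) := by
  intro x hx
  choose a ha hle using hpeak
  have ha_tendsto : Tendsto a atTop atTop := by
    refine tendsto_atTop_of_le_norm_iterate (T := T) hη hy ?_
    filter_upwards [eventually_gt_atTop 0] with j hj
    exact hle j (a j) ⟨le_rfl, lt_mul_of_one_lt_left (ha j) (by omega)⟩
  have hsmall : ∀ z ∈ stableSubspace T, ∀ δ > 0, ∀ᶠ n in atTop, ‖T^[n] z‖ < δ := fun z hz δ hδ => by
    simpa only [dist_zero_right] using Metric.tendsto_nhds.mp (mem_stableSubspace.mp hz) δ hδ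
  obtain ⟨N, hN⟩ := eventually_atTop.mp (hsmall x hx (η / 2) (by positivity))
  have hlim : Tendsto (fun j => x + y j) atTop (𝓝 x) := by simpa using hy.const_add x
  refine mem_closure_of_tendsto hlim ?_
  filter_upwards [ha_tendsto.eventually_ge_atTop N, eventually_ge_atTop k] with j hNj hkj
  have hxy := add_mem hx (hstable j)
  refine ⟨hxy, holdsOnWindow_of_eventually (hsmall _ hxy _ (by positivity)) k,
    a j, ha j, fun n hn => ?_⟩
  have hpeak_n : η ≤ ‖T^[n] (y j)‖ :=
    hle j n ⟨hn.1, hn.2.trans_le (Nat.mul_le_mul_right _ (by omega))⟩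
  have hsub := norm_sub_le (T^[n] x + T^[n] (y j)) (T^[n] x)
  rw [add_sub_cancel_left] at hsub
  change η / 2 < ‖T^[n] (x + y j)‖
  rw [iterate_map_add]
  linarith [hN n (hNj.trans hn.1)]

theorem distributionallyChaotic_of_tendsto_zero_of_holdsOnWindow [CompleteSpace 𝕜]
    [CompleteSpace E] {η : ℝ} (hη : 0 < η) {y : ℕ → E} (hy : Tendsto y atTop (𝓝 0))
    (hstable : ∀ k, y k ∈ stableSubspace T)
    (hpeak : ∀ k, HoldsOnWindow k fun n => η ≤ ‖T^[n] (y k)‖) : DistributionallyChaotic T := by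
  obtain ⟨x, hx⟩ := nonempty_iInter_of_subset_closure_inter (stableSubspace T).nonempty
    (isOpen_irregularSet T (η / 2))
    (stableSubspace_subset_closure_inter_irregularSet hη hy hstable hpeak)
  exact (distributionallyChaoticPair_zero_of_mem_irregularSet (half_pos hη)
    (Set.mem_iInter.mp hx)).distributionallyChaotic

end LinearDynamics

section JordanBlock

lemma iterate_apply_of_apply_eq_smul_add_smul {R M : Type*} [CommRing R] [AddCommGroup M]
    [Module R M] {A : M →ₗ[R] M} {e f : M} {μ c : R} (he : A e = μ • e)
    (hf : A f = μ • f + c • e) (n : ℕ) :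
    A^[n] f = μ ^ n • f + (n * μ ^ (n - 1) * c) • e := by
  induction n with
  | zero => simp
  | succ n ih =>
    rw [Function.iterate_succ_apply', ih, map_add, map_smul, map_smul, he, hf]
    cases n with
    | zero => simp
    | succ n =>
      simp only [Nat.add_sub_cancel]
      push_cast
      module

lemma mem_stableSubspace_of_apply_eq_smul_add_smul {𝕜 E : Type*} [NontriviallyNormedField 𝕜]
    [NormedAddCommGroup E] [NormedSpace 𝕜 E] {T : E →L[𝕜] E} {e f : E} {μ c : 𝕜}
    (he : T e = μ • e) (hf : T f = μ • f + c • e) (hμ : ‖μ‖ < 1) : f ∈ stableSubspace T := by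
  have hpow : Tendsto (fun n : ℕ => μ ^ n) atTop (𝓝 0) :=
    tendsto_pow_atTop_nhds_zero_of_norm_lt_one hμ
  have hcoeff : Tendsto (fun n : ℕ => n * μ ^ (n - 1)) atTop (𝓝 0) := by
    refine (tendsto_add_atTop_iff_nat 1).mp ?_
    have hmul : Tendsto (fun n : ℕ => n * μ ^ n) atTop (𝓝 0) := by
      refine squeeze_zero_norm (fun n => ?_)
        (tendsto_self_mul_const_pow_of_lt_one (norm_nonneg μ) hμ)
      rw [norm_mul, norm_pow]
      gcongr
      simpa using Nat.norm_cast_le (α := 𝕜) n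
    simpa only [Nat.add_sub_cancel, Nat.cast_succ, add_mul, one_mul, add_zero] using hmul.add hpow
  have horbit : ∀ n, T^[n] f = μ ^ n • f + (n * μ ^ (n - 1) * c) • e :=
    iterate_apply_of_apply_eq_smul_add_smul (A := T.toLinearMap) he hf
  simpa only [mem_stableSubspace, horbit, zero_smul, zero_mul, add_zero] using
    (hpow.smul_const f).add ((hcoeff.mul_const c).smul_const e)

lemma exists_decay_holdsOnWindow {c : ℝ} (hc : 0 < c) (hc1 : c ≤ 1) (k : ℕ) :
    ∃ d, 0 < d ∧ d ≤ c / 2 ∧ HoldsOnWindow k fun n => 1 / 2 ≤ n * (1 - d) ^ (n - 1) * c ^ 2 := by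
  obtain ⟨a, ha⟩ := exists_nat_ge (1 / c ^ 2)
  have ha_pos : (0 : ℝ) < a := lt_of_lt_of_le (by positivity) ha
  have hac : 1 ≤ a * c ^ 2 := (div_le_iff₀ (by positivity)).mp ha
  set d : ℝ := 1 / (2 * ((k + 1) * a)) with hd
  have hd_pos : 0 < d := by positivity
  have hda : (k + 1) * a * d = 1 / 2 := by
    rw [hd]
    field_simp
  have hdc : d ≤ c / 2 := by
    have had : a * d ≤ 1 / 2 := by
      refine le_trans ?_ hda.le
      rw [mul_assoc]
      exact le_mul_of_one_le_left (by positivity) (by simp)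
    calc d ≤ a * c ^ 2 * d := le_mul_of_one_le_left hd_pos.le hac
      _ = a * d * c ^ 2 := by ring
      _ ≤ 1 / 2 * c := by
        gcongr
        exact pow_le_of_le_one hc.le hc1 two_ne_zero
      _ = c / 2 := by ring
  have hd0 : 0 ≤ 1 - d := by linarith
  refine ⟨d, hd_pos, hdc, a, Nat.cast_pos.mp ha_pos, fun n hn => ?_⟩
  have hn_le : (n : ℝ) ≤ (k + 1) * a := by exact_mod_cast hn.2.le
  have hnd : n * d ≤ 1 / 2 := hda ▸ mul_le_mul_of_nonneg_right hn_le hd_pos.le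
  calc (1 / 2 : ℝ) ≤ 1 + n * -d := by linarith
    _ ≤ (1 + -d) ^ n := one_add_mul_le_pow (by linarith) n
    _ ≤ (1 - d) ^ (n - 1) := by
      rw [← sub_eq_add_neg]
      exact pow_le_pow_of_le_one hd0 (by linarith) n.pred_le
    _ ≤ a * c ^ 2 * (1 - d) ^ (n - 1) := le_mul_of_one_le_left (by positivity) hac
    _ ≤ n * c ^ 2 * (1 - d) ^ (n - 1) := by
      gcongr
      exact_mod_cast hn.1
    _ = n * (1 - d) ^ (n - 1) * c ^ 2 := by ring

end JordanBlock

lemma isCompactOperator_tsum {𝕜 E F ι : Type*} [NontriviallyNormedField 𝕜]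
    [NormedAddCommGroup E] [NormedSpace 𝕜 E] [NormedAddCommGroup F] [NormedSpace 𝕜 F]
    [CompleteSpace F] {A : ι → E →L[𝕜] F} (hA : Summable A)
    (hcompact : ∀ i, IsCompactOperator (A i)) : IsCompactOperator (∑' i, A i : E →L[𝕜] F) :=
  isCompactOperator_of_tendsto hA.hasSum <| Eventually.of_forall fun _ =>
    Submodule.sum_mem (compactOperator (RingHom.id 𝕜) E F) fun i _ => hcompact i

section Hilbert

open InnerProductSpace

variable {𝕜 H ι : Type*} [RCLike 𝕜] [NormedAddCommGroup H] [InnerProductSpace 𝕜 H]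

lemma norm_mul_le_norm_iterate {T : H →L[𝕜] H} {e f : H} {μ c : 𝕜} (he : T e = μ • e)
    (hf : T f = μ • f + c • e) (henorm : ‖e‖ = 1) (hef : inner 𝕜 e f = 0) (n : ℕ) :
    n * ‖μ‖ ^ (n - 1) * ‖c‖ ≤ ‖T^[n] f‖ := by
  have horbit : T^[n] f = μ ^ n • f + (n * μ ^ (n - 1) * c) • e :=
    iterate_apply_of_apply_eq_smul_add_smul (A := T.toLinearMap) he hf n
  have hcoord : inner 𝕜 e (T^[n] f) = n * μ ^ (n - 1) * c := by
    rw [horbit, inner_add_right, inner_smul_right, inner_smul_right, hef,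
      inner_self_eq_one_of_norm_eq_one henorm, mul_zero, zero_add, mul_one]
  calc n * ‖μ‖ ^ (n - 1) * ‖c‖ = ‖inner 𝕜 e (T^[n] f)‖ := by
        rw [hcoord, norm_mul, norm_mul, norm_pow, RCLike.norm_natCast]
    _ ≤ ‖e‖ * ‖T^[n] f‖ := norm_inner_le_norm _ _
    _ = ‖T^[n] f‖ := by rw [henorm, one_mul]

lemma isCompactOperator_rankOne {E F : Type*} [NormedAddCommGroup E] [NormedSpace 𝕜 E]
    [NormedAddCommGroup F] [InnerProductSpace 𝕜 F] (x : E) (y : F) :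
    IsCompactOperator (rankOne 𝕜 x y) :=
  (isCompactOperator_of_locallyCompactSpace_dom (innerSL 𝕜 y)).clm_comp
    (ContinuousLinearMap.toSpanSingleton 𝕜 x)

/-- For orthonormal `e` and `f`, the operator that is `!![-d, c; 0, -d]` on `span {e, f}` and `0`
on its orthogonal complement, so that adding it to the identity creates a Jordan block with
eigenvalue `1 - d`. -/
noncomputable def jordanPerturbation (c d : 𝕜) (e f : H) : H →L[𝕜] H :=
  c • rankOne 𝕜 e f - d • (rankOne 𝕜 e e + rankOne 𝕜 f f)

lemma isCompactOperator_jordanPerturbation (c d : 𝕜) (e f : H) :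
    IsCompactOperator (jordanPerturbation c d e f) :=
  ((isCompactOperator_rankOne e f).smul c).sub
    (((isCompactOperator_rankOne e e).add (isCompactOperator_rankOne f f)).smul d)

lemma norm_jordanPerturbation_le (c d : 𝕜) {e f : H} (he : ‖e‖ = 1) (hf : ‖f‖ = 1) :
    ‖jordanPerturbation c d e f‖ ≤ ‖c‖ + 2 * ‖d‖ := by
  have hsum : ‖rankOne 𝕜 e e + rankOne 𝕜 f f‖ ≤ 2 := by
    refine (norm_add_le _ _).trans_eq ?_
    rw [norm_rankOne, norm_rankOne, he, hf]
    norm_num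
  calc ‖jordanPerturbation c d e f‖
      ≤ ‖c • rankOne 𝕜 e f‖ + ‖d • (rankOne 𝕜 e e + rankOne 𝕜 f f)‖ := norm_sub_le _ _
    _ = ‖c‖ + ‖d‖ * ‖rankOne 𝕜 e e + rankOne 𝕜 f f‖ := by
      rw [norm_smul, norm_smul, norm_rankOne, he, hf, mul_one, mul_one]
    _ ≤ ‖c‖ + ‖d‖ * 2 := by gcongr
    _ = ‖c‖ + 2 * ‖d‖ := by rw [mul_comm 2]

/-- The sum of the perturbations `jordanPerturbation (c i) (d i)` on the planes spanned by
`u (inl i)` and `u (inr i)`. It is `0` if the series does not converge in norm. -/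
noncomputable def jordanSeries (u : ι ⊕ ι → H) (c d : ι → 𝕜) : H →L[𝕜] H :=
  ∑' i, jordanPerturbation (c i) (d i) (u (.inl i)) (u (.inr i))

variable {u : ι ⊕ ι → H} {c d : ι → 𝕜}

lemma jordanSeries_apply
    (hK : Summable fun i => jordanPerturbation (c i) (d i) (u (.inl i)) (u (.inr i))) (z : H) :
    jordanSeries u c d z =
      ∑' i, jordanPerturbation (c i) (d i) (u (.inl i)) (u (.inr i)) z :=
  (ContinuousLinearMap.apply 𝕜 H z).map_tsum hK

lemma jordanSeries_apply_inl (hu : Orthonormal 𝕜 u)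
    (hK : Summable fun i => jordanPerturbation (c i) (d i) (u (.inl i)) (u (.inr i))) (i : ι) :
    jordanSeries u c d (u (.inl i)) = -d i • u (.inl i) := by
  have hinner := orthonormal_iff_ite.mp hu
  rw [jordanSeries_apply hK, tsum_eq_single i fun j hj => by
    simp [jordanPerturbation, hinner, hj]]
  simp [jordanPerturbation, hinner, hu.1]

lemma jordanSeries_apply_inr (hu : Orthonormal 𝕜 u)
    (hK : Summable fun i => jordanPerturbation (c i) (d i) (u (.inl i)) (u (.inr i))) (i : ι) :
    jordanSeries u c d (u (.inr i)) = c i • u (.inl i) - d i • u (.inr i) := by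
  have hinner := orthonormal_iff_ite.mp hu
  rw [jordanSeries_apply hK, tsum_eq_single i fun j hj => by
    simp [jordanPerturbation, hinner, hj]]
  simp [jordanPerturbation, hinner, hu.1]

theorem distributionallyChaotic_one_add_jordanSeries [CompleteSpace H] {u : ℕ ⊕ ℕ → H}
    (hu : Orthonormal 𝕜 u) {c d : ℕ → ℝ}
    (hK : Summable fun j => jordanPerturbation (c j : 𝕜) (d j : 𝕜) (u (.inl j)) (u (.inr j)))
    (hc : Tendsto c atTop (𝓝 0)) (hd_pos : ∀ j, 0 < d j) (hd_lt : ∀ j, d j < 1)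
    (hwindow : ∀ j, HoldsOnWindow j fun n => 1 / 2 ≤ n * (1 - d j) ^ (n - 1) * c j ^ 2) :
    DistributionallyChaotic ⇑(1 + jordanSeries u (fun j => (c j : 𝕜)) fun j => (d j : 𝕜)) := by
  set T : H →L[𝕜] H := 1 + jordanSeries u (fun j => (c j : 𝕜)) fun j => (d j : 𝕜) with hT
  have hTe : ∀ j, T (u (.inl j)) = ((1 - d j : ℝ) : 𝕜) • u (.inl j) := fun j => by
    rw [hT, add_apply, one_apply_eq_self, jordanSeries_apply_inl hu hK]
    push_cast
    module
  have hTf : ∀ j, T (u (.inr j)) = ((1 - d j : ℝ) : 𝕜) • u (.inr j) + (c j : 𝕜) • u (.inl j) :=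
    fun j => by
      rw [hT, add_apply, one_apply_eq_self, jordanSeries_apply_inr hu hK]
      push_cast
      module
  have hμ : ∀ j, ‖((1 - d j : ℝ) : 𝕜)‖ = 1 - d j := fun j =>
    RCLike.norm_of_nonneg (sub_nonneg.mpr (hd_lt j).le)
  refine distributionallyChaotic_of_tendsto_zero_of_holdsOnWindow one_half_pos
    (y := fun j => (c j : 𝕜) • u (.inr j)) ?_ (fun j => ?_) fun j => (hwindow j).mono fun n hn => ?_
  · refine tendsto_zero_iff_norm_tendsto_zero.mpr ?_
    simpa only [norm_smul, hu.1, mul_one, RCLike.norm_ofReal, abs_zero] using hc.abs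
  · refine Submodule.smul_mem _ _ (mem_stableSubspace_of_apply_eq_smul_add_smul (hTe j) (hTf j) ?_)
    rw [hμ]
    exact sub_lt_self _ (hd_pos j)
  · have hgrowth := norm_mul_le_norm_iterate (hTe j) (hTf j) (hu.1 _) (hu.2 Sum.inl_ne_inr) n
    rw [hμ, RCLike.norm_ofReal] at hgrowth
    calc 1 / 2 ≤ n * (1 - d j) ^ (n - 1) * c j ^ 2 := hn
      _ = |c j| * (n * (1 - d j) ^ (n - 1) * |c j|) := by
        rw [← sq_abs]
        ring
      _ ≤ |c j| * ‖T^[n] (u (.inr j))‖ := by gcongr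
      _ = ‖T^[n] ((c j : 𝕜) • u (.inr j))‖ := by
        rw [← FunLike.coe_pow_eq_iterate, map_smul, norm_smul, RCLike.norm_ofReal]

theorem exists_isCompactOperator_distributionallyChaotic_one_add [CompleteSpace H]
    {u : ℕ ⊕ ℕ → H} (hu : Orthonormal 𝕜 u) {ε : ℝ} (hε : 0 < ε) :
    ∃ K : H →L[𝕜] H, IsCompactOperator K ∧ ‖K‖ < ε ∧ DistributionallyChaotic ⇑(1 + K) := by
  obtain ⟨c, hc_pos, s, hc_sum, hs⟩ := posSumOfEncodable (show 0 < min 1 (ε / 3) by positivity) ℕ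
  have hc_le : ∀ j, c j ≤ 1 := fun j =>
    (le_hasSum hc_sum j fun i _ => (hc_pos i).le).trans (hs.trans (min_le_left _ _))
  choose d hd_pos hdc hwindow using fun j => exists_decay_holdsOnWindow (hc_pos j) (hc_le j) j
  have hbound : ∀ j, ‖jordanPerturbation (c j : 𝕜) (d j : 𝕜) (u (.inl j)) (u (.inr j))‖
      ≤ 2 * c j := fun j => by
    refine (norm_jordanPerturbation_le _ _ (hu.1 _) (hu.1 _)).trans ?_
    rw [RCLike.norm_of_nonneg (hc_pos j).le, RCLike.norm_of_nonneg (hd_pos j).le]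
    linarith [hdc j]
  have hK := Summable.of_norm_bounded (hc_sum.mul_left 2).summable hbound
  refine ⟨jordanSeries u (fun j => (c j : 𝕜)) fun j => (d j : 𝕜),
    isCompactOperator_tsum hK fun j => isCompactOperator_jordanPerturbation _ _ _ _, ?_,
    distributionallyChaotic_one_add_jordanSeries hu hK hc_sum.summable.tendsto_atTop_zero hd_pos
      (fun j => by linarith [hdc j, hc_le j]) hwindow⟩
  calc ‖jordanSeries u (fun j => (c j : 𝕜)) fun j => (d j : 𝕜)‖ ≤ 2 * s :=
        tsum_of_norm_bounded (hc_sum.mul_left 2) hbound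
    _ < ε := by linarith [hs.trans (min_le_right 1 (ε / 3))]

lemma separableSpace_of_countable_hilbertBasis [Countable ι] (b : HilbertBasis ι 𝕜 H) :
    TopologicalSpace.SeparableSpace H := by
  have hspan := ((Set.countable_range b).isSeparable.span (R := 𝕜)).closure
  rwa [← Submodule.topologicalClosure_coe, b.dense_span, Submodule.top_coe,
    TopologicalSpace.isSeparable_univ_iff] at hspan

end Hilbert

/-- For every ε > 0 there are a bounded operator T on a separable
complex Hilbert space and a compact operator K with ‖K‖ < ε such that T is
distributionally chaotic but T - K is not: distributional chaos is not
preserved under compact perturbations. -/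
theorem stmt_18 (ε : ℝ) (hε : 0 < ε) :
    ∃ (H : Type) (_ : NormedAddCommGroup H) (_ : InnerProductSpace ℂ H),
      CompleteSpace H ∧ TopologicalSpace.SeparableSpace H ∧
      ∃ T K : H →L[ℂ] H,
        IsCompactOperator (⇑K) ∧ ‖K‖ < ε ∧
        DistributionallyChaotic (fun x => T x) ∧
        ¬ DistributionallyChaotic (fun x => (T - K) x) := by
  let H := lp (fun _ : ℕ ⊕ ℕ => ℂ) 2
  let b : HilbertBasis (ℕ ⊕ ℕ) ℂ H := default
  obtain ⟨K, hK_compact, hK_norm, hchaos⟩ :=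
    exists_isCompactOperator_distributionallyChaotic_one_add b.orthonormal hε
  refine ⟨H, inferInstance, inferInstance, inferInstance,
    separableSpace_of_countable_hilbertBasis b, 1 + K, K, hK_compact, hK_norm, hchaos, ?_⟩
  rw [add_sub_cancel_right]
  exact not_distributionallyChaotic_of_isometry isometry_id
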